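/- There exists a universal constant C > 0 with the following property. For all d > 0 and all r with 0 < r < d/2, if u : ℝ³ → ℝ is continuously differentiable with compact support and u vanishes on the perforated set K_r = ⋃_{x ∈ (dℤ)³} cl(B_r(x)), then ∫_{ℝ³} |u(y)|² dy ≤ C (d³/r) ∫_{ℝ³} |∇u(y)|² dy. -/

import Mathlib

open MeasureTheory
open scoped ENNReal

/-- The perforated set `K_r = ⋃_{x ∈ (dℤ)³} cl(B_r(x))`: the union of the closed balls of
radius `r` centered at the points of the lattice `(dℤ)³ ⊂ ℝ³`. -/
def latticePerforation (d r : ℝ) : Set (EuclideanSpace ℝ (Fin 3)) :=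
  ⋃ x ∈ {x : EuclideanSpace ℝ (Fin 3) | ∀ i, ∃ m : ℤ, x i = m * d},
    Metric.closedBall x r

/-!
Cut `ℝⁿ`, `n ≥ 3`, into the cubes of side `d` centred at the lattice points. On each cube use polar
coordinates about the centre `c`: along a ray, `u` vanishes up to radius `r`, so the fundamental
theorem of calculus and the Cauchy–Schwarz inequality give
`|u(c + ρω)|² ≤ (∫_r^∞ s^{1-n} ds) (∫_r^ρ |∇u(c + sω)|² s^{n-1} ds)`.
The first factor equals `1 / ((n - 2) r^{n-2})`. A cube is star-shaped about its centre and lies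
within distance `√n d / 2` of it, so integrating over `ρ^{n-1} dρ dω` bounds `∫ |u|²` over the cube
by `(√n d / 2)^n / (n (n - 2) r^{n-2})` times `∫ |∇u|²` over the same cube. It remains to sum over
the cubes.
-/

open Set Metric Module

section WeightedIntegrals

theorem sq_lintegral_le_lintegral_inv_mul_lintegral_mul_sq {α : Type*} [MeasurableSpace α]
    {μ : Measure α} {w f : α → ℝ≥0∞} (hw : AEMeasurable w μ) (hf : AEMeasurable f μ)
    (hw_zero : ∀ᵐ x ∂μ, w x ≠ 0) (hw_top : ∀ᵐ x ∂μ, w x ≠ ∞) :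
    (∫⁻ x, f x ∂μ) ^ 2 ≤ (∫⁻ x, (w x)⁻¹ ∂μ) * ∫⁻ x, w x * f x ^ 2 ∂μ := by
  have sq_rpow_half (a : ℝ≥0∞) : (a ^ (1 / 2 : ℝ)) ^ 2 = a := by
    rw [← ENNReal.rpow_natCast, ← ENNReal.rpow_mul]
    norm_num
  have holder := ENNReal.lintegral_mul_le_Lp_mul_Lq μ Real.HolderConjugate.two_two
    (hw.inv.pow_const (1 / 2 : ℝ)) ((hw.pow_const (1 / 2 : ℝ)).mul hf)
  simp only [Pi.mul_apply, Pi.inv_apply, ENNReal.rpow_two, mul_pow, sq_rpow_half] at holder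
  have split : ∫⁻ x, f x ∂μ = ∫⁻ x, (w x)⁻¹ ^ (1 / 2 : ℝ) * (w x ^ (1 / 2 : ℝ) * f x) ∂μ := by
    refine lintegral_congr_ae ?_
    filter_upwards [hw_zero, hw_top] with x hx_zero hx_top
    rw [← mul_assoc, ← ENNReal.mul_rpow_of_nonneg _ _ (by norm_num),
      ENNReal.inv_mul_cancel hx_zero hx_top, ENNReal.one_rpow, one_mul]
  calc (∫⁻ x, f x ∂μ) ^ 2
      ≤ ((∫⁻ x, (w x)⁻¹ ∂μ) ^ (1 / 2 : ℝ) * (∫⁻ x, w x * f x ^ 2 ∂μ) ^ (1 / 2 : ℝ)) ^ 2 := by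
        rw [split]
        gcongr
    _ = (∫⁻ x, (w x)⁻¹ ∂μ) * ∫⁻ x, w x * f x ^ 2 ∂μ := by
        rw [mul_pow, sq_rpow_half, sq_rpow_half]

variable {m : ℕ} {r R : ℝ}

theorem lintegral_Ioi_inv_pow (hm : 1 < m) (hr : 0 < r) :
    ∫⁻ s in Ioi r, (ENNReal.ofReal (s ^ m))⁻¹ =
      ENNReal.ofReal (1 / ((m - 1) * r ^ (m - 1))) := by
  have hm' : (1 : ℝ) < m := by exact_mod_cast hm
  have exponent_lt : -(m : ℝ) < -1 := by linarith
  have integrand (s : ℝ) (hs : s ∈ Ioi r) :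
      (ENNReal.ofReal (s ^ m))⁻¹ = ENNReal.ofReal (s ^ (-(m : ℝ))) := by
    have hs_pos : 0 < s := hr.trans hs
    rw [← ENNReal.ofReal_inv_of_pos (by positivity), Real.rpow_neg hs_pos.le, Real.rpow_natCast]
  have exponent_add_one : -(m : ℝ) + 1 = -((m - 1 : ℕ) : ℝ) := by
    rw [Nat.cast_pred (by lia)]
    ring
  rw [setLIntegral_congr_fun measurableSet_Ioi integrand,
    ← ofReal_integral_eq_lintegral_ofReal (integrableOn_Ioi_rpow_of_lt exponent_lt hr),
    integral_Ioi_rpow_of_lt exponent_lt hr, exponent_add_one, Real.rpow_neg hr.le,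
    Real.rpow_natCast, Nat.cast_pred (by lia), neg_div_neg_eq, ← one_div, div_div, mul_comm]
  filter_upwards [ae_restrict_mem measurableSet_Ioi] with s hs
  exact Real.rpow_nonneg (hr.trans hs).le _

theorem lintegral_Ioc_zero_pow (m : ℕ) (hR : 0 ≤ R) :
    ∫⁻ s in Ioc 0 R, ENNReal.ofReal (s ^ m) = ENNReal.ofReal (R ^ (m + 1) / (m + 1)) := by
  rw [← ofReal_integral_eq_lintegral_ofReal (continuous_pow m).integrableOn_Ioc,
    ← intervalIntegral.integral_of_le hR, integral_pow, zero_pow (by simp), sub_zero]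
  filter_upwards [ae_restrict_mem measurableSet_Ioc] with s hs
  exact pow_nonneg hs.1.le m

end WeightedIntegrals

section HalfLine

variable {F : Type*} [NormedAddCommGroup F] [NormedSpace ℝ F] {f : ℝ → F} {m : ℕ} {r R ρ : ℝ}

theorem enorm_sub_sq_le_lintegral_pow_mul_enorm_deriv_sq (hf : ContDiff ℝ 1 f) (hm : 1 < m)
    (hr : 0 < r) (hρ : r ≤ ρ) :
    ‖f ρ - f r‖ₑ ^ 2 ≤ ENNReal.ofReal (1 / ((m - 1) * r ^ (m - 1))) *
      ∫⁻ s in Ioc r ρ, ENNReal.ofReal (s ^ m) * ‖deriv f s‖ₑ ^ 2 := by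
  have measurable_deriv : Measurable fun s ↦ ‖deriv f s‖ₑ :=
    hf.continuous_deriv_one.enorm.measurable
  have weight_ne_zero : ∀ᵐ s ∂volume.restrict (Ioc r ρ), ENNReal.ofReal (s ^ m) ≠ 0 := by
    filter_upwards [ae_restrict_mem measurableSet_Ioc] with s hs
    exact (ENNReal.ofReal_pos.2 (pow_pos (hr.trans hs.1) m)).ne'
  calc ‖f ρ - f r‖ₑ ^ 2
      ≤ (∫⁻ s in Ioc r ρ, ‖deriv f s‖ₑ) ^ 2 := by
        rw [setLIntegral_congr Ioc_ae_eq_Icc]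
        gcongr
        exact enorm_sub_le_lintegral_deriv_of_contDiffOn_Icc hf.contDiffOn hρ
    _ ≤ (∫⁻ s in Ioc r ρ, (ENNReal.ofReal (s ^ m))⁻¹) *
          ∫⁻ s in Ioc r ρ, ENNReal.ofReal (s ^ m) * ‖deriv f s‖ₑ ^ 2 :=
        sq_lintegral_le_lintegral_inv_mul_lintegral_mul_sq (by fun_prop)
          measurable_deriv.aemeasurable weight_ne_zero (by simp)
    _ ≤ _ := by
        rw [← lintegral_Ioi_inv_pow hm hr]
        gcongr
        exact Ioc_subset_Ioi_self

theorem lintegral_pow_mul_enorm_sq_le {S : Set ℝ} (hf : ContDiff ℝ 1 f) (hm : 1 < m) (hr : 0 < r)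
    (hR : 0 ≤ R) (hf_zero : ∀ s ∈ Ioc 0 r, f s = 0) (hS : MeasurableSet S) (hSR : S ⊆ Ioc 0 R)
    (hS_lower : ∀ ρ ∈ S, Ioc 0 ρ ⊆ S) :
    ∫⁻ s in S, ENNReal.ofReal (s ^ m) * ‖f s‖ₑ ^ 2 ≤
      ENNReal.ofReal (R ^ (m + 1) / ((m + 1) * ((m - 1) * r ^ (m - 1)))) *
        ∫⁻ s in S, ENNReal.ofReal (s ^ m) * ‖deriv f s‖ₑ ^ 2 := by
  set K := ENNReal.ofReal (1 / ((m - 1) * r ^ (m - 1)))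
  set D := ∫⁻ s in S, ENNReal.ofReal (s ^ m) * ‖deriv f s‖ₑ ^ 2
  have pointwise (ρ : ℝ) (hρ : ρ ∈ S) : ‖f ρ‖ₑ ^ 2 ≤ K * D := by
    rcases le_total ρ r with hρr | hrρ
    · simp [hf_zero ρ ⟨(hSR hρ).1, hρr⟩]
    · have ftc := enorm_sub_sq_le_lintegral_pow_mul_enorm_deriv_sq hf hm hr hrρ
      rw [hf_zero r ⟨hr, le_rfl⟩, sub_zero] at ftc
      refine ftc.trans ?_
      gcongr
      exact lintegral_mono_set ((Ioc_subset_Ioc_left hr.le).trans (hS_lower ρ hρ))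
  have weight_nonneg : 0 ≤ R ^ (m + 1) / ((m : ℝ) + 1) := by positivity
  calc ∫⁻ s in S, ENNReal.ofReal (s ^ m) * ‖f s‖ₑ ^ 2
      ≤ ∫⁻ s in S, ENNReal.ofReal (s ^ m) * (K * D) :=
        setLIntegral_mono' hS fun s hs ↦ by gcongr; exact pointwise s hs
    _ ≤ ∫⁻ s in Ioc 0 R, ENNReal.ofReal (s ^ m) * (K * D) := lintegral_mono_set hSR
    _ = ENNReal.ofReal (R ^ (m + 1) / (m + 1)) * (K * D) := by
        rw [lintegral_mul_const _ (by fun_prop), lintegral_Ioc_zero_pow m hR]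
    _ = _ := by
        rw [← mul_assoc, ← ENNReal.ofReal_mul weight_nonneg, div_mul_div_comm, mul_one]

end HalfLine

section PolarCoordinates

theorem lintegral_volumeIoiPow (m : ℕ) {f : ℝ → ℝ≥0∞} (hf : Measurable f) :
    ∫⁻ s, f s ∂Measure.volumeIoiPow m = ∫⁻ s in Ioi (0 : ℝ), ENNReal.ofReal (s ^ m) * f s := by
  rw [Measure.volumeIoiPow, lintegral_withDensity_eq_lintegral_mul _ (by fun_prop)
    (show Measurable fun s : Ioi (0 : ℝ) ↦ f s from hf.comp measurable_subtype_coe)]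
  exact lintegral_subtype_comap measurableSet_Ioi fun s ↦ ENNReal.ofReal (s ^ m) * f s

variable {E : Type*} [NormedAddCommGroup E] [NormedSpace ℝ E] [FiniteDimensional ℝ E]
  [Nontrivial E] [MeasurableSpace E] [BorelSpace E] (μ : Measure E) [μ.IsAddHaarMeasure]

theorem lintegral_eq_lintegral_toSphere {f : E → ℝ≥0∞} (hf : Measurable f) :
    ∫⁻ x, f x ∂μ = ∫⁻ ω : sphere (0 : E) 1, (∫⁻ s in Ioi (0 : ℝ),
      ENNReal.ofReal (s ^ (finrank ℝ E - 1)) * f (s • (ω : E))) ∂μ.toSphere := by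
  have measurable_polar : Measurable fun p : sphere (0 : E) 1 × Ioi (0 : ℝ) ↦
      f ((p.2 : ℝ) • (p.1 : E)) := hf.comp (by fun_prop)
  calc ∫⁻ x, f x ∂μ
      = ∫⁻ x : ({0}ᶜ : Set E), f x ∂μ.comap Subtype.val := by
        rw [lintegral_subtype_comap (measurableSet_singleton _).compl, restrict_compl_singleton]
    _ = ∫⁻ p, f ((p.2 : ℝ) • (p.1 : E))
          ∂μ.toSphere.prod (Measure.volumeIoiPow (finrank ℝ E - 1)) := by
        rw [← μ.measurePreserving_homeomorphUnitSphereProd.lintegral_comp measurable_polar]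
        refine lintegral_congr fun x ↦ ?_
        have norm_ne_zero : ‖(x : E)‖ ≠ 0 := norm_ne_zero_iff.2 x.2
        simp [smul_smul, norm_ne_zero]
    _ = _ := by
        rw [lintegral_prod _ measurable_polar.aemeasurable]
        exact lintegral_congr fun ω ↦ lintegral_volumeIoiPow _ (f := fun s ↦ f (s • (ω : E)))
          (hf.comp (by fun_prop))

theorem setLIntegral_eq_lintegral_toSphere {f : E → ℝ≥0∞} (hf : Measurable f) {Q : Set E}
    (hQ : MeasurableSet Q) (c : E) :
    ∫⁻ x in Q, f x ∂μ = ∫⁻ ω : sphere (0 : E) 1,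
      (∫⁻ s in {s : ℝ | 0 < s ∧ c + s • (ω : E) ∈ Q},
        ENNReal.ofReal (s ^ (finrank ℝ E - 1)) * f (c + s • (ω : E))) ∂μ.toSphere := by
  have measurable_translate : Measurable fun x ↦ Q.indicator f (c + x) :=
    (hf.indicator hQ).comp (measurable_const_add c)
  rw [← lintegral_indicator hQ, ← lintegral_add_left_eq_self _ c,
    lintegral_eq_lintegral_toSphere μ measurable_translate]
  refine lintegral_congr fun ω ↦ ?_
  have measurableSet_ray : MeasurableSet ((fun s : ℝ ↦ c + s • (ω : E)) ⁻¹' Q) :=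
    hQ.preimage (by fun_prop)
  have restrict_eq : volume.restrict {s : ℝ | 0 < s ∧ c + s • (ω : E) ∈ Q} =
      (volume.restrict (Ioi 0)).restrict ((fun s : ℝ ↦ c + s • (ω : E)) ⁻¹' Q) := by
    rw [Measure.restrict_restrict measurableSet_ray, inter_comm]
    rfl
  rw [restrict_eq, ← lintegral_indicator measurableSet_ray]
  refine lintegral_congr fun s ↦ ?_
  by_cases hs : c + s • (ω : E) ∈ Q <;> simp [hs]

end PolarCoordinates

section StarShapedCells

variable {E F : Type*} [NormedAddCommGroup E] [NormedSpace ℝ E] [NormedAddCommGroup F]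
  [NormedSpace ℝ F] {u : E → F} {r R : ℝ}

theorem enorm_deriv_comp_add_smul_le {c ω : E} {s : ℝ}
    (hu : DifferentiableAt ℝ u (c + s • ω)) :
    ‖deriv (fun t : ℝ ↦ u (c + t • ω)) s‖ₑ ≤ ‖fderiv ℝ u (c + s • ω)‖ₑ * ‖ω‖ₑ := by
  have hasDerivAt_ray : HasDerivAt (fun t : ℝ ↦ c + t • ω) ω s := by
    simpa using ((hasDerivAt_id s).smul_const ω).const_add c
  have deriv_eq : deriv (fun t : ℝ ↦ u (c + t • ω)) s = fderiv ℝ u (c + s • ω) ω :=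
    (hu.hasFDerivAt.comp_hasDerivAt s hasDerivAt_ray).deriv
  rw [deriv_eq]
  exact (fderiv ℝ u (c + s • ω)).le_opENorm ω

theorem lintegral_ray_enorm_sq_le_of_starConvex [MeasurableSpace E] [BorelSpace E] {n : ℕ}
    {c ω : E} {Q : Set E} (hn : 2 < n) (hr : 0 < r) (hR : 0 ≤ R) (hu : ContDiff ℝ 1 u)
    (hu_zero : ∀ x ∈ closedBall c r, u x = 0) (hQ : MeasurableSet Q) (hQ_star : StarConvex ℝ c Q)
    (hQR : Q ⊆ closedBall c R) (hω : ‖ω‖ = 1) :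
    ∫⁻ s in {s : ℝ | 0 < s ∧ c + s • ω ∈ Q},
        ENNReal.ofReal (s ^ (n - 1)) * ‖u (c + s • ω)‖ₑ ^ 2 ≤
      ENNReal.ofReal (R ^ n / (n * ((n - 2) * r ^ (n - 2)))) *
        ∫⁻ s in {s : ℝ | 0 < s ∧ c + s • ω ∈ Q},
          ENNReal.ofReal (s ^ (n - 1)) * ‖fderiv ℝ u (c + s • ω)‖ₑ ^ 2 := by
  obtain ⟨m, rfl⟩ : ∃ m, n = m + 1 := ⟨n - 1, by lia⟩
  have dist_ray {s : ℝ} (hs : 0 < s) : dist (c + s • ω) c = s := by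
    rw [dist_self_add_left, norm_smul, hω, mul_one, Real.norm_of_nonneg hs.le]
  have ray_zero (s : ℝ) (hs : s ∈ Ioc 0 r) : u (c + s • ω) = 0 :=
    hu_zero _ (mem_closedBall.2 ((dist_ray hs.1).trans_le hs.2))
  have measurableSet_ray : MeasurableSet {s : ℝ | 0 < s ∧ c + s • ω ∈ Q} :=
    measurableSet_Ioi.inter (hQ.preimage (by fun_prop))
  have ray_subset : {s : ℝ | 0 < s ∧ c + s • ω ∈ Q} ⊆ Ioc 0 R := fun s hs ↦
    ⟨hs.1, (dist_ray hs.1).symm.trans_le (mem_closedBall.1 (hQR hs.2))⟩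
  have ray_lower (ρ : ℝ) (hρ : ρ ∈ {s : ℝ | 0 < s ∧ c + s • ω ∈ Q}) :
      Ioc 0 ρ ⊆ {s : ℝ | 0 < s ∧ c + s • ω ∈ Q} := by
    refine fun s hs ↦ ⟨hs.1, ?_⟩
    have segment_mem := hQ_star.add_smul_sub_mem hρ.2 (div_nonneg hs.1.le hρ.1.le)
      (div_le_one_of_le₀ hs.2 hρ.1.le)
    rwa [add_sub_cancel_left, smul_smul, div_mul_cancel₀ _ hρ.1.ne'] at segment_mem
  have ray_bound := lintegral_pow_mul_enorm_sq_le (f := fun s : ℝ ↦ u (c + s • ω)) (m := m)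
    (hu.comp (by fun_prop)) (by lia) hr hR ray_zero measurableSet_ray ray_subset ray_lower
  have deriv_le (s : ℝ) :
      ‖deriv (fun t : ℝ ↦ u (c + t • ω)) s‖ₑ ≤ ‖fderiv ℝ u (c + s • ω)‖ₑ := by
    simpa [← ofReal_norm ω, hω] using
      enorm_deriv_comp_add_smul_le (hu.differentiable one_ne_zero (c + s • ω))
  have cast_sub : ((m + 1 : ℕ) : ℝ) - 2 = m - 1 := by push_cast; ring
  rw [cast_sub, Nat.cast_succ, Nat.add_sub_cancel]
  refine ray_bound.trans (mul_le_mul' le_rfl (lintegral_mono fun s ↦ ?_))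
  gcongr
  exact deriv_le s

variable [FiniteDimensional ℝ E] [MeasurableSpace E] [BorelSpace E]
  (μ : Measure E) [μ.IsAddHaarMeasure]

theorem setLIntegral_enorm_sq_le_of_starConvex {c : E} {Q : Set E} (hE : 2 < finrank ℝ E)
    (hr : 0 < r) (hR : 0 ≤ R) (hu : ContDiff ℝ 1 u) (hu_zero : ∀ x ∈ closedBall c r, u x = 0)
    (hQ : MeasurableSet Q) (hQ_star : StarConvex ℝ c Q) (hQR : Q ⊆ closedBall c R) :
    ∫⁻ x in Q, ‖u x‖ₑ ^ 2 ∂μ ≤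
      ENNReal.ofReal
          (R ^ finrank ℝ E / (finrank ℝ E * ((finrank ℝ E - 2) * r ^ (finrank ℝ E - 2)))) *
        ∫⁻ x in Q, ‖fderiv ℝ u x‖ₑ ^ 2 ∂μ := by
  have : Nontrivial E := nontrivial_of_finrank_pos (R := ℝ) (by lia)
  have measurable_u : Measurable fun x ↦ ‖u x‖ₑ ^ 2 :=
    hu.continuous.enorm.measurable.pow_const 2
  have measurable_fderiv : Measurable fun x ↦ ‖fderiv ℝ u x‖ₑ ^ 2 :=
    (hu.continuous_fderiv one_ne_zero).enorm.measurable.pow_const 2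
  rw [setLIntegral_eq_lintegral_toSphere μ measurable_u hQ c,
    setLIntegral_eq_lintegral_toSphere μ measurable_fderiv hQ c,
    ← lintegral_const_mul' _ _ ENNReal.ofReal_ne_top]
  exact lintegral_mono fun ω ↦ lintegral_ray_enorm_sq_le_of_starConvex hE hr hR hu hu_zero hQ
    hQ_star hQR (norm_eq_of_mem_sphere ω)

theorem lintegral_enorm_sq_le_of_starConvex_partition {ι : Type*} [Countable ι] {c : ι → E}
    {Q : ι → Set E} (hE : 2 < finrank ℝ E) (hr : 0 < r) (hR : 0 ≤ R) (hu : ContDiff ℝ 1 u)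
    (hu_zero : ∀ i, ∀ x ∈ closedBall (c i) r, u x = 0) (hQ : ∀ i, MeasurableSet (Q i))
    (hQ_disjoint : Pairwise (Function.onFun Disjoint Q)) (hQ_cover : ⋃ i, Q i = univ)
    (hQ_star : ∀ i, StarConvex ℝ (c i) (Q i)) (hQR : ∀ i, Q i ⊆ closedBall (c i) R) :
    ∫⁻ x, ‖u x‖ₑ ^ 2 ∂μ ≤
      ENNReal.ofReal
          (R ^ finrank ℝ E / (finrank ℝ E * ((finrank ℝ E - 2) * r ^ (finrank ℝ E - 2)))) *
        ∫⁻ x, ‖fderiv ℝ u x‖ₑ ^ 2 ∂μ := by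
  have lintegral_eq_tsum (f : E → ℝ≥0∞) : ∫⁻ x, f x ∂μ = ∑' i, ∫⁻ x in Q i, f x ∂μ := by
    rw [← lintegral_iUnion hQ hQ_disjoint, hQ_cover, setLIntegral_univ]
  rw [lintegral_eq_tsum, lintegral_eq_tsum, ← ENNReal.tsum_mul_left]
  exact ENNReal.tsum_le_tsum fun i ↦ setLIntegral_enorm_sq_le_of_starConvex μ hE hr hR hu
    (hu_zero i) (hQ i) (hQ_star i) (hQR i)

end StarShapedCells

section CubicLattice

variable {ι : Type*} {d : ℝ}

/-- The point `d m` of the cubic lattice `(dℤ)^ι`. -/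
noncomputable def latticePoint (d : ℝ) (m : ι → ℤ) : EuclideanSpace ℝ ι :=
  WithLp.toLp 2 fun i ↦ m i * d

/-- The cube of side `d` centred at `latticePoint d m`, used as its cell in a partition of space;
it is half-open so that the cells of distinct lattice points are disjoint. -/
def latticeCell (d : ℝ) (m : ι → ℤ) : Set (EuclideanSpace ℝ ι) :=
  {y | ∀ i, y i - m i * d ∈ Ico (-(d / 2)) (d / 2)}

theorem existsUnique_sub_intCast_mul_mem_Ico (hd : 0 < d) (t : ℝ) :
    ∃! k : ℤ, t - k * d ∈ Ico (-(d / 2)) (d / 2) := by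
  have interval_eq : -(d / 2) + d = d / 2 := by ring
  simpa only [zsmul_eq_mul, interval_eq] using existsUnique_sub_zsmul_mem_Ico hd t (-(d / 2))

theorem iUnion_latticeCell (hd : 0 < d) : ⋃ m : ι → ℤ, latticeCell d m = univ := by
  refine eq_univ_of_forall fun y ↦ mem_iUnion.2 ?_
  choose m hm _ using fun i ↦ existsUnique_sub_intCast_mul_mem_Ico hd (y i)
  exact ⟨m, hm⟩

theorem pairwise_disjoint_latticeCell (hd : 0 < d) :
    Pairwise (Function.onFun Disjoint (latticeCell (ι := ι) d)) := by
  refine fun m m' hne ↦ disjoint_left.2 fun y hy hy' ↦ hne ?_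
  exact funext fun i ↦ (existsUnique_sub_intCast_mul_mem_Ico hd (y i)).unique (hy i) (hy' i)

theorem convex_latticeCell (d : ℝ) (m : ι → ℤ) : Convex ℝ (latticeCell d m) := by
  simp only [latticeCell, ofPred_forall]
  refine convex_iInter fun i ↦ ?_
  have cell_eq : {y : EuclideanSpace ℝ ι | y i - m i * d ∈ Ico (-(d / 2)) (d / 2)} =
      EuclideanSpace.proj (𝕜 := ℝ) i ⁻¹' Ico (-(d / 2) + m i * d) (d / 2 + m i * d) := by
    ext y
    simp [sub_lt_iff_lt_add, le_sub_iff_add_le]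
  rw [cell_eq]
  exact (convex_Ico _ _).linear_preimage (EuclideanSpace.proj (𝕜 := ℝ) i).toLinearMap

theorem latticePoint_mem_latticeCell (hd : 0 < d) (m : ι → ℤ) :
    latticePoint d m ∈ latticeCell d m := by
  intro i
  simp [latticePoint, hd, (half_pos hd).le]

theorem measurableSet_latticeCell [Countable ι] (d : ℝ) (m : ι → ℤ) :
    MeasurableSet (latticeCell d m) := by
  simp only [latticeCell, ofPred_forall]
  exact MeasurableSet.iInter fun i ↦ measurableSet_Ico.preimage (by fun_prop)

theorem latticeCell_subset_closedBall [Fintype ι] (hd : 0 ≤ d) (m : ι → ℤ) :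
    latticeCell d m ⊆ closedBall (latticePoint d m) (√(Fintype.card ι) / 2 * d) := by
  intro y hy
  have coord_le (i : ι) : dist (y i) (latticePoint d m i) ≤ d / 2 :=
    abs_le.2 ⟨(hy i).1, (hy i).2.le⟩
  calc dist y (latticePoint d m)
      = √(∑ i, dist (y i) (latticePoint d m i) ^ 2) := EuclideanSpace.dist_eq _ _
    _ ≤ √(∑ _i : ι, (d / 2) ^ 2) := by gcongr with i; exact coord_le i
    _ = √(Fintype.card ι) / 2 * d := by
        rw [Finset.sum_const, Finset.card_univ, nsmul_eq_mul, Real.sqrt_mul (by positivity),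
          Real.sqrt_sq (by positivity)]
        ring

theorem closedBall_latticePoint_subset_latticePerforation (d r : ℝ) (m : Fin 3 → ℤ) :
    closedBall (latticePoint d m) r ⊆ latticePerforation d r :=
  subset_biUnion_of_mem (u := fun x ↦ closedBall x r) fun i ↦ ⟨m i, rfl⟩

end CubicLattice

theorem enorm_gradient {𝕜 E : Type*} [RCLike 𝕜] [NormedAddCommGroup E] [InnerProductSpace 𝕜 E]
    [CompleteSpace E] (u : E → 𝕜) (y : E) : ‖gradient u y‖ₑ = ‖fderiv 𝕜 u y‖ₑ :=
  LinearIsometryEquiv.enorm_map _ _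

theorem poincare_perforated_domain_general {ι F : Type*} [Fintype ι] [NormedAddCommGroup F]
    [NormedSpace ℝ F] (hι : 2 < Fintype.card ι) {d r : ℝ} (hd : 0 < d) (hr : 0 < r)
    {u : EuclideanSpace ℝ ι → F} (hu : ContDiff ℝ 1 u)
    (hu_zero : ∀ m : ι → ℤ, ∀ y ∈ closedBall (latticePoint d m) r, u y = 0) :
    ∫⁻ y, ‖u y‖ₑ ^ 2 ≤
      ENNReal.ofReal ((√(Fintype.card ι) / 2) ^ Fintype.card ι /
          (Fintype.card ι * (Fintype.card ι - 2)) *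
            (d ^ Fintype.card ι / r ^ (Fintype.card ι - 2))) *
        ∫⁻ y, ‖fderiv ℝ u y‖ₑ ^ 2 := by
  have finrank_eq : finrank ℝ (EuclideanSpace ℝ ι) = Fintype.card ι := finrank_euclideanSpace
  have bound := lintegral_enorm_sq_le_of_starConvex_partition volume (finrank_eq ▸ hι) hr
    (show 0 ≤ √(Fintype.card ι) / 2 * d by positivity) hu hu_zero (measurableSet_latticeCell d)
    (pairwise_disjoint_latticeCell hd) (iUnion_latticeCell hd)
    (fun m ↦ (convex_latticeCell d m).starConvex (latticePoint_mem_latticeCell hd m))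
    (latticeCell_subset_closedBall hd.le)
  rwa [finrank_eq, mul_pow, ← mul_assoc, ← div_mul_div_comm] at bound

/-- **Poincaré inequality for perforated domains.**
There is a universal constant `C > 0` such that for `0 < r < d/2`, every compactly
supported `C¹` function `u : ℝ³ → ℝ` vanishing on the perforated set
`K_r = ⋃_{x ∈ (dℤ)³} cl(B_r(x))` satisfies `∫ u² ≤ C (d³/r) ∫ |∇u|²`. -/
theorem poincare_perforated_domain :
    ∃ C : ℝ, 0 < C ∧
      ∀ d r : ℝ, 0 < d → 0 < r → r < d / 2 →
        ∀ u : EuclideanSpace ℝ (Fin 3) → ℝ,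
          ContDiff ℝ 1 u → HasCompactSupport u →
          (∀ y ∈ latticePerforation d r, u y = 0) →
          ∫⁻ y, (‖u y‖₊ : ℝ≥0∞) ^ 2
            ≤ ENNReal.ofReal (C * (d ^ 3 / r)) *
                ∫⁻ y, (‖gradient u y‖₊ : ℝ≥0∞) ^ 2 := by
  refine ⟨(√3 / 2) ^ 3 / (3 * (3 - 2)), by norm_num, fun d r hd hr _ u hu _ hu_zero ↦ ?_⟩
  simpa [← enorm_eq_nnnorm, enorm_gradient] using
    poincare_perforated_domain_general (by simp) hd hr hu fun m y hy ↦ hu_zero y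
      (closedBall_latticePoint_subset_latticePerforation d r m hy)
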